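/- arXiv:1910.00916 — 3 statements merged into one kernel-verified Lean document; each statement's English description precedes it below -/
import Mathlib

section
/- Let M and N be positive integers, let S : Fin N → Finset (Fin M) assign to each job i a nonempty set S i of required workers, and let v : Fin N → ℝ assign nonnegative weights. Assume the jobs are indexed in sorted order, i.e., for all i ≤ j one has v j * Real.sqrt (card (S i)) ≤ v i * Real.sqrt (card (S j)) (equivalently v i / √(card (S i)) is nonincreasing in i). Let D₂ ⊆ Fin N be a greedy selection, meaning: (i) the sets S i for i ∈ D₂ are pairwise disjoint, and (ii) for every k ∉ D₂ there exists i ∈ D₂ with i < k and S i ∩ S k ≠ ∅. Then for every D₁ ⊆ Fin N whose sets S k, k ∈ D₁, are pairwise disjoint, one has ∑_{k ∈ D₁} v k ≤ Real.sqrt M * ∑_{i ∈ D₂} v i. (Lemma 3: the greedy approximate scheduling algorithm, which sorts jobs by weight divided by the square root of the number of required workers and selects each job whose workers are all still available, is a √M-approximation to the maximum-weight interference-free set of jobs.) -/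
/-- Lemma 3: the greedy approximate scheduling algorithm (jobs sorted by
weight divided by the square root of the number of required workers, each job
selected if all its workers are still available) is a `√M`-approximation to the
maximum-weight interference-free set of jobs. -/
theorem stmt_0 (M N : ℕ) (hM : 0 < M) (hN : 0 < N)
    (S : Fin N → Finset (Fin M)) (hS : ∀ i, (S i).Nonempty)
    (v : Fin N → ℝ) (hv : ∀ i, 0 ≤ v i)
    (hsorted : ∀ i j : Fin N, i ≤ j →
      v j * Real.sqrt ((S i).card) ≤ v i * Real.sqrt ((S j).card))
    (D₂ : Finset (Fin N))
    (hD₂disj : ∀ i ∈ D₂, ∀ j ∈ D₂, i ≠ j → Disjoint (S i) (S j))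
    (hgreedy : ∀ k ∉ D₂, ∃ i ∈ D₂, i < k ∧ (S i ∩ S k).Nonempty)
    (D₁ : Finset (Fin N))
    (hD₁disj : ∀ i ∈ D₁, ∀ j ∈ D₁, i ≠ j → Disjoint (S i) (S j)) :
    ∑ k ∈ D₁, v k ≤ Real.sqrt M * ∑ i ∈ D₂, v i := by
  classical
  have hex : ∀ k, ∃ i ∈ D₂, i ≤ k ∧ (S i ∩ S k).Nonempty := by
    intro k
    by_cases hk : k ∈ D₂
    · exact ⟨k, hk, le_rfl, by simpa using hS k⟩
    · obtain ⟨i, hi, hlt, hne⟩ := hgreedy k hk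
      exact ⟨i, hi, hlt.le, hne⟩
  choose f hf hle hne using hex
  choose g hg using hne
  rw [← Finset.sum_fiberwise_of_maps_to (s := D₁) (t := D₂) (g := f) (fun k _ => hf k),
    Finset.mul_sum]
  refine Finset.sum_le_sum fun i _ => ?_
  set F := D₁.filter (fun k => f k = i) with hF
  have hFmem : ∀ k ∈ F, k ∈ D₁ ∧ f k = i := fun k hk => by simpa [hF] using hk
  -- each job in the fiber uses its own worker of job `i`
  have hcard : F.card ≤ (S i).card := by
    refine Finset.card_le_card_of_injOn g (fun k hk => ?_) (fun a ha b hb hab => ?_)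
    · have h := (Finset.mem_inter.1 (hg k)).1
      rw [(hFmem k hk).2] at h
      exact h
    · by_contra hne
      have hd := hD₁disj a (hFmem a ha).1 b (hFmem b hb).1 hne
      have h1 := (Finset.mem_inter.1 (hg a)).2
      have h2 := (Finset.mem_inter.1 (hg b)).2
      rw [← hab] at h2
      exact Finset.disjoint_left.1 hd h1 h2
  have hsum : ∑ k ∈ F, (S k).card ≤ M := by
    rw [← Finset.card_biUnion (fun a ha b hb hab =>
      hD₁disj a (hFmem a ha).1 b (hFmem b hb).1 hab)]
    simpa using Finset.card_le_univ (F.biUnion S)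
  have hcs : ∑ k ∈ F, Real.sqrt ((S k).card) ≤ Real.sqrt ((S i).card) * Real.sqrt M := by
    rw [← Real.sqrt_mul (Nat.cast_nonneg _)]
    apply Real.le_sqrt_of_sq_le
    refine sq_sum_le_card_mul_sum_sq.trans ?_
    have h1 : ∑ k ∈ F, Real.sqrt ((S k).card) ^ 2 = ((∑ k ∈ F, (S k).card : ℕ) : ℝ) := by
      push_cast
      exact Finset.sum_congr rfl fun k _ => Real.sq_sqrt (Nat.cast_nonneg _)
    rw [h1]
    exact_mod_cast Nat.mul_le_mul hcard hsum
  have hpos : 0 < Real.sqrt ((S i).card) :=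
    Real.sqrt_pos.2 (by exact_mod_cast (hS i).card_pos)
  refine le_of_mul_le_mul_right ?_ hpos
  calc (∑ k ∈ F, v k) * Real.sqrt ((S i).card)
      = ∑ k ∈ F, v k * Real.sqrt ((S i).card) := Finset.sum_mul _ _ _
    _ ≤ ∑ k ∈ F, v i * Real.sqrt ((S k).card) :=
        Finset.sum_le_sum fun k hk => hsorted i k ((hFmem k hk).2 ▸ hle k)
    _ = v i * ∑ k ∈ F, Real.sqrt ((S k).card) := (Finset.mul_sum _ _ _).symm
    _ ≤ v i * (Real.sqrt ((S i).card) * Real.sqrt M) :=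
        mul_le_mul_of_nonneg_left hcs (hv i)
    _ = Real.sqrt M * v i * Real.sqrt ((S i).card) := by ring
end

section
/- Let M be a positive integer, let S ⊆ Fin M be a nonempty finite set, and let v ≥ 0 be a real number. Let C be a finite index set (a Finset of some type ι), let T : ι → Finset (Fin M) be such that for every k ∈ C the set T k is nonempty and T k ∩ S ≠ ∅, and such that the sets T k, k ∈ C, are pairwise disjoint. Let w : ι → ℝ be nonnegative weights satisfying w k * Real.sqrt (card S) ≤ v * Real.sqrt (card (T k)) for every k ∈ C (i.e., w k / √(card (T k)) ≤ v / √(card S)). Then ∑_{k ∈ C} w k ≤ v * Real.sqrt M. (Per-job bound, Eq. (8) in the proof of Lemma 3: the total optimal weight attributable to jobs blocked by a single greedy job of weight v is at most v√M.) -/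
/-- Per-job bound, Eq. (8) in the proof of Lemma 3: the total optimal weight
attributable to jobs blocked by a single greedy job of weight `v` is at most
`v * √M`. -/
theorem stmt_1 {ι : Type*} (M : ℕ) (hM : 0 < M)
    (S : Finset (Fin M)) (hS : S.Nonempty) (v : ℝ) (hv : 0 ≤ v)
    (C : Finset ι) (T : ι → Finset (Fin M))
    (hT : ∀ k ∈ C, (T k).Nonempty)
    (hTS : ∀ k ∈ C, (T k ∩ S).Nonempty)
    (hdisj : ∀ k ∈ C, ∀ k' ∈ C, k ≠ k' → Disjoint (T k) (T k'))
    (w : ι → ℝ) (hw : ∀ k ∈ C, 0 ≤ w k)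
    (hwk : ∀ k ∈ C, w k * Real.sqrt S.card ≤ v * Real.sqrt ((T k).card)) :
    ∑ k ∈ C, w k ≤ v * Real.sqrt M := by
  classical
  have h1 : C.card ≤ S.card := by
    have hd : ∀ k ∈ C, ∀ k' ∈ C, k ≠ k' → Disjoint (T k ∩ S) (T k' ∩ S) :=
      fun k hk k' hk' hne => (hdisj k hk k' hk' hne).mono
        Finset.inter_subset_left Finset.inter_subset_left
    calc C.card = ∑ k ∈ C, 1 := by simp
      _ ≤ ∑ k ∈ C, (T k ∩ S).card :=
        Finset.sum_le_sum fun k hk => Finset.card_pos.mpr (hTS k hk)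
      _ = (C.biUnion fun k => T k ∩ S).card := (Finset.card_biUnion hd).symm
      _ ≤ S.card := Finset.card_le_card
        (Finset.biUnion_subset.mpr fun k _ => Finset.inter_subset_right)
  have h2 : ∑ k ∈ C, (T k).card ≤ M := by
    rw [← Finset.card_biUnion hdisj]
    exact (Finset.card_le_univ _).trans (by simp)
  have h1r : (C.card : ℝ) ≤ S.card := by exact_mod_cast h1
  have h2r : ∑ k ∈ C, ((T k).card : ℝ) ≤ M := by exact_mod_cast h2
  have hSpos : (0 : ℝ) < S.card := by exact_mod_cast Finset.card_pos.mpr hS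
  have h3 : ∑ k ∈ C, Real.sqrt ((T k).card) ≤ Real.sqrt M * Real.sqrt S.card := by
    rw [← Real.sqrt_mul (Nat.cast_nonneg M)]
    apply Real.le_sqrt_of_sq_le
    calc (∑ k ∈ C, Real.sqrt ((T k).card)) ^ 2
        ≤ C.card * ∑ k ∈ C, (Real.sqrt ((T k).card)) ^ 2 := sq_sum_le_card_mul_sum_sq
      _ = C.card * ∑ k ∈ C, ((T k).card : ℝ) := by
        simp only [Real.sq_sqrt (Nat.cast_nonneg _)]
      _ ≤ S.card * M := by gcongr
      _ = M * S.card := mul_comm _ _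
  refine le_of_mul_le_mul_right ?_ (Real.sqrt_pos.mpr hSpos)
  calc (∑ k ∈ C, w k) * Real.sqrt S.card = ∑ k ∈ C, w k * Real.sqrt S.card :=
        Finset.sum_mul _ _ _
    _ ≤ ∑ k ∈ C, v * Real.sqrt ((T k).card) := Finset.sum_le_sum hwk
    _ = v * ∑ k ∈ C, Real.sqrt ((T k).card) := (Finset.mul_sum _ _ _).symm
    _ ≤ v * (Real.sqrt M * Real.sqrt S.card) := mul_le_mul_of_nonneg_left h3 hv
    _ = v * Real.sqrt M * Real.sqrt S.card := (mul_assoc _ _ _).symm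
end

section
/- Let c > 0 and let x : ℕ → ℝ satisfy x t ≥ 0 and x (t+1) ≥ x t − c for all t ≥ 1. Suppose there exists B ≥ 0 such that ∑_{t=1}^{T} x t ≤ B * T for every T ≥ 1 (bounded time averages). Then x T / T tends to 0 as T → ∞. (Intermediate claim in the sample-path argument for Proposition 2: if a nonnegative sequence can decrease by at most c per step and has bounded running averages, then it grows sublinearly.) -/
/-- Intermediate claim in the sample-path argument for Proposition 2: if a
nonnegative sequence can decrease by at most `c` per step and has bounded
running averages, then it grows sublinearly. -/
theorem stmt_5 (c : ℝ) (hc : 0 < c) (x : ℕ → ℝ)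
    (hx : ∀ t ≥ 1, 0 ≤ x t) (hdec : ∀ t ≥ 1, x (t + 1) ≥ x t - c)
    (B : ℝ) (hB : 0 ≤ B)
    (havg : ∀ T ≥ 1, ∑ t ∈ Finset.Icc 1 T, x t ≤ B * T) :
    Filter.Tendsto (fun T : ℕ => x T / T) Filter.atTop (nhds 0) := by
  have h1 : ∀ T ≥ 1, ∀ k : ℕ, x (T + k) ≥ x T - c * k := by
    intro T hT k
    induction k with
    | zero => simp
    | succ k ih =>
      have := hdec (T + k) (by omega)
      rw [← add_assoc]
      push_cast
      linarith
  have h2 : ∀ T ≥ 1, ∀ k : ℕ,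
      (k : ℝ) * x T - c * k ^ 2 ≤ ∑ t ∈ Finset.Icc 1 (T + k), x t := by
    intro T hT k
    induction k with
    | zero =>
      simp only [Nat.cast_zero, add_zero]
      have : 0 ≤ ∑ t ∈ Finset.Icc 1 T, x t :=
        Finset.sum_nonneg fun i hi => hx i (Finset.mem_Icc.1 hi).1
      simpa using this
    | succ k ih =>
      rw [← add_assoc, Finset.sum_Icc_succ_top (by omega)]
      have := h1 T hT (k + 1)
      rw [← add_assoc] at this
      push_cast at this ⊢
      have h3 : 0 ≤ c * (k : ℝ) := by positivity
      nlinarith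
  rw [Metric.tendsto_atTop]
  intro ε hε
  obtain ⟨e, he, heε, hec⟩ : ∃ e : ℝ, 0 < e ∧ e ≤ ε ∧ e ≤ c :=
    ⟨min ε c, lt_min hε hc, min_le_left _ _, min_le_right _ _⟩
  obtain ⟨N, hN⟩ := exists_nat_gt ((4 * B / e + 1) * (2 * c / e))
  refine ⟨N + 1, fun T hT => ?_⟩
  have hT1 : 1 ≤ T := by omega
  have hTpos : (0 : ℝ) < T := by exact_mod_cast hT1
  have hNT : (N : ℝ) ≤ T := by exact_mod_cast (by omega : N ≤ T)
  rw [Real.dist_eq, sub_zero, abs_of_nonneg (div_nonneg (hx T hT1) hTpos.le),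
    div_lt_iff₀ hTpos]
  by_contra! hcon
  have hxe : e * T ≤ x T := le_trans (by gcongr) hcon
  have hk1 := Nat.floor_le (a := e * T / (2 * c)) (by positivity)
  have hk2 := Nat.lt_floor_add_one (e * T / (2 * c))
  set k := ⌊e * T / (2 * c)⌋₊
  have hk0 : (0 : ℝ) ≤ k := by positivity
  have hs := (h2 T hT1 k).trans (havg (T + k) (by omega))
  push_cast at hs
  rw [le_div_iff₀ (by positivity)] at hk1
  have hkT : (k : ℝ) ≤ T := by
    have : (k : ℝ) * c ≤ T * c := by nlinarith
    exact le_of_mul_le_mul_right this hc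
  have ha : (k : ℝ) * (e * T / 2) ≤ k * (x T - c * k) := by
    apply mul_le_mul_of_nonneg_left _ hk0
    linarith
  have hb : B * (T + k) ≤ B * (2 * T) := by
    apply mul_le_mul_of_nonneg_left _ hB
    linarith
  have hd : (k * e) * T ≤ (4 * B) * T := by nlinarith
  have hf : (k : ℝ) ≤ 4 * B / e := by
    rw [le_div_iff₀ he]
    exact le_of_mul_le_mul_right hd hTpos
  have hg : e * T / (2 * c) < 4 * B / e + 1 := by linarith
  have hh : (T : ℝ) < (4 * B / e + 1) * (2 * c / e) := by
    have := mul_lt_mul_of_pos_right hg (show 0 < 2 * c / e by positivity)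
    have h5 : e * T / (2 * c) * (2 * c / e) = T := by field_simp
    linarith
  linarith
end
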